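/- Let E₀ > 0, let σ̂₁ : Ḡ×I'×I → ℝ be continuous and C¹ in its second (primed) variable with continuous derivative, let 0 < α < 1, 0 < β < 1, and let ψ : Ḡ×S×I → ℝ be continuous, α-Hölder in ω ∈ S uniformly and β-Hölder in E uniformly (ψ ∈ C(Ḡ×I, C^α(S)) ∩ C(Ḡ×S, C^β(I))). Then there exists u ∈ C(Ḡ×S×I) such that for all (x,ω,E) ∈ Ḡ×S×I with E < E_m: p.f.∫_E^{E_m} (1/(E'−E))·σ̂₁(x,E',E)·( ∫_0^{2π} ψ(x, γ(E',E,ω)(s), E') ds ) dE' = 2π·log(E_m−E)·σ̂₁(x,E,E)·ψ(x,ω,E) + u(x,ω,E). -/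

import Mathlib

open MeasureTheory Filter Set Metric
open scoped Topology Real

noncomputable section

abbrev E3 : Type := EuclideanSpace ℝ (Fin 3)

/-- The vector `(a,b,c) ∈ ℝ³` as an element of `EuclideanSpace ℝ (Fin 3)`. -/
def vec3 (a b c : ℝ) : E3 := (EuclideanSpace.equiv (Fin 3) ℝ).symm ![a, b, c]

/-- The third standard basis vector `e₃`. -/
def e₃ : E3 := EuclideanSpace.single 2 1

/-- `μ(E',E) = √( E(E'+2) / (E'(E+2)) )`. -/
def mu (E' E : ℝ) : ℝ := Real.sqrt (E * (E' + 2) / (E' * (E + 2)))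

/-- The parametrization `γ(E',E,ω)(s)` of the circle `{ω' ∈ S : ω'·ω = μ(E',E)}`. -/
def gam (R : E3 → (E3 ≃ₗᵢ[ℝ] E3)) (E' E : ℝ) (ω : E3) (s : ℝ) : E3 :=
  R ω (vec3 (Real.sqrt (1 - mu E' E ^ 2) * Real.cos s)
        (Real.sqrt (1 - mu E' E ^ 2) * Real.sin s) (mu E' E))

/-- Hadamard finite part of order 1 with upper limit `b`. -/
def HasPF1Upper (g : ℝ → ℝ) (x b L : ℝ) : Prop :=
  Tendsto (fun ε : ℝ => (∫ t in (x + ε)..b, g t / (t - x)) + g x * Real.log ε)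
    (𝓝[>] (0 : ℝ)) (𝓝 L)

/-
Writing `g t = g a + (t - a) * slope g a t`, the finite part of `g t / (t - a)` on `[a, b]` equals
`g a * log (b - a)` plus the ordinary integral of the slope, which converges as soon as `g`
satisfies a Dini condition at `a`. The scattering integral satisfies one of Hölder type, because
`‖γ(E', E, ω)(s) - ω‖ ^ 2 = 2 * (1 - μ(E', E)) = O(E' - E)`. The remainder `u` is therefore the
integral of the slope; rescaling `[E, E_m]` to `[0, 1]` makes it continuous by dominated
convergence.

The frame `R` may depend wildly on `ω`, but two frames with the same value at `e₃` differ by an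
isometry fixing `e₃`, which acts on the circles around `e₃` as a rotation or a reflection and so
preserves the integrals over them. Near any `ω₀` one may thus replace `R` by a continuous frame,
namely a reflection composed with a fixed isometry.
-/

section FinitePart

variable {g : ℝ → ℝ} {a b : ℝ}

theorem integral_div_sub_eq_integral_slope_add {ε : ℝ} (hε : 0 < ε) (hεb : a + ε < b)
    (hg : IntervalIntegrable (slope g a) volume a b) :
    ∫ t in (a + ε)..b, g t / (t - a) =
      (∫ t in (a + ε)..b, slope g a t) + g a * (Real.log (b - a) - Real.log ε) := by
  have hpos : ∀ t ∈ uIcc (a + ε) b, 0 < t - a := fun t ht => by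
    rw [uIcc_of_le hεb.le] at ht
    linarith [ht.1]
  have hslope : IntervalIntegrable (slope g a) volume (a + ε) b :=
    hg.mono_set (uIcc_subset_uIcc_right (mem_uIcc_of_le (le_add_of_nonneg_right hε.le) hεb.le))
  have hinv : IntervalIntegrable (fun t => g a * (t - a)⁻¹) volume (a + ε) b :=
    IntervalIntegrable.const_mul
      (intervalIntegral.intervalIntegrable_inv (fun t ht => (hpos t ht).ne') (by fun_prop)) _
  have hlog : ∫ t in (a + ε)..b, (t - a)⁻¹ = Real.log (b - a) - Real.log ε := by
    rw [intervalIntegral.integral_comp_sub_right (fun t => t⁻¹), add_sub_cancel_left,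
      integral_inv_of_pos hε (by linarith), Real.log_div (by linarith) hε.ne']
  calc ∫ t in (a + ε)..b, g t / (t - a)
      = ∫ t in (a + ε)..b, (slope g a t + g a * (t - a)⁻¹) :=
        intervalIntegral.integral_congr fun t _ => by
          simp only [slope_def_field]
          ring
    _ = _ := by
        rw [intervalIntegral.integral_add hslope hinv, intervalIntegral.integral_const_mul, hlog]

theorem hasPF1Upper_of_intervalIntegrable_slope (hab : a < b)
    (hg : IntervalIntegrable (slope g a) volume a b) :
    HasPF1Upper g a b (g a * Real.log (b - a) + ∫ t in a..b, slope g a t) := by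
  have hprim : ContinuousWithinAt (fun c => ∫ t in c..b, slope g a t) (Icc a b) a := by
    rw [← uIcc_of_le hab.le]
    exact intervalIntegral.continuousOn_primitive_interval_left
      ((intervalIntegrable_iff' (by finiteness)).1 hg) a left_mem_uIcc
  have hshift : Tendsto (fun ε => a + ε) (𝓝[>] 0) (𝓝[Icc a b] a) := by
    refine tendsto_nhdsWithin_iff.2 ⟨?_, ?_⟩
    · exact ((continuous_const_add a).tendsto' 0 a (add_zero a)).mono_left nhdsWithin_le_nhds
    · filter_upwards [Ioo_mem_nhdsGT (sub_pos.2 hab)] with ε hε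
      exact ⟨by linarith [hε.1], by linarith [hε.2]⟩
  refine ((hprim.tendsto.comp hshift).const_add (g a * Real.log (b - a))).congr' ?_
  filter_upwards [Ioo_mem_nhdsGT (sub_pos.2 hab)] with ε hε
  rw [integral_div_sub_eq_integral_slope_add hε.1 (by linarith [hε.2]) hg, Function.comp_apply]
  ring

theorem integral_slope_eq_integral_slope_comp_lineMap {F : Type*} [NormedAddCommGroup F]
    [NormedSpace ℝ F] (g : ℝ → F) (a b : ℝ) :
    ∫ t in a..b, slope g a t = ∫ r in (0 : ℝ)..1, slope (g ∘ AffineMap.lineMap a b) 0 r := by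
  have hsubst := intervalIntegral.smul_integral_comp_add_mul (a := 0) (b := 1) (slope g a) (b - a) a
  rw [mul_zero, add_zero, mul_one, add_sub_cancel] at hsubst
  rw [← hsubst, ← intervalIntegral.integral_smul]
  refine intervalIntegral.integral_congr fun r _ => ?_
  have hline : AffineMap.lineMap a b r = a + (b - a) * r := by
    rw [AffineMap.lineMap_apply_ring']
    ring
  simp only [slope_def_module, Function.comp_apply, AffineMap.lineMap_apply_zero, hline,
    add_sub_cancel_left, sub_zero, smul_smul, mul_inv]
  rcases eq_or_ne a b with rfl | hne
  · simp only [sub_self, zero_mul, add_zero, smul_zero]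
  · rw [mul_inv_cancel_left₀ (sub_ne_zero.2 hne.symm)]

theorem aestronglyMeasurable_slope (hab : a ≤ b) (hg : ContinuousOn g (Icc a b)) :
    AEStronglyMeasurable (slope g a) (volume.restrict (uIoc a b)) := by
  rw [uIoc_of_le hab]
  refine ContinuousOn.aestronglyMeasurable ?_ measurableSet_Ioc
  exact ((continuousOn_id.sub continuousOn_const).inv₀ fun t ht => (sub_pos.2 ht.1).ne').smul
    ((hg.mono Ioc_subset_Icc_self).sub continuousOn_const)

end FinitePart

/-- A Dini modulus: a nondecreasing `φ` on `[0, ∞)` with `∫ φ(r)/r dr` convergent at `0`. -/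
structure IsDiniModulus (φ : ℝ → ℝ) : Prop where
  monotoneOn : MonotoneOn φ (Ici 0)
  intervalIntegrable_div : ∀ l, 0 ≤ l → IntervalIntegrable (fun r => φ r / r) volume 0 l

namespace IsDiniModulus

variable {φ χ : ℝ → ℝ}

theorem rpow {p : ℝ} (hp : 0 < p) : IsDiniModulus fun r => r ^ p where
  monotoneOn := fun _ hr _ _ hrs => Real.rpow_le_rpow hr hrs hp.le
  intervalIntegrable_div := fun l hl => by
    refine (intervalIntegral.intervalIntegrable_rpow' (r := p - 1) (by linarith)).congr_uIoo
      fun r hr => ?_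
    rw [uIoo_of_le hl] at hr
    exact Real.rpow_sub_one hr.1.ne' p

theorem add (hφ : IsDiniModulus φ) (hχ : IsDiniModulus χ) : IsDiniModulus fun r => φ r + χ r where
  monotoneOn := hφ.monotoneOn.add hχ.monotoneOn
  intervalIntegrable_div := fun l hl => by
    simpa only [add_div] using (hφ.intervalIntegrable_div l hl).add (hχ.intervalIntegrable_div l hl)

theorem const_mul (hφ : IsDiniModulus φ) {c : ℝ} (hc : 0 ≤ c) :
    IsDiniModulus fun r => c * φ r where
  monotoneOn := fun _ hr _ hs hrs => mul_le_mul_of_nonneg_left (hφ.monotoneOn hr hs hrs) hc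
  intervalIntegrable_div := fun l hl => by
    simpa only [mul_div_assoc] using (hφ.intervalIntegrable_div l hl).const_mul c

theorem comp_const_mul (hφ : IsDiniModulus φ) {c : ℝ} (hc : 0 < c) :
    IsDiniModulus fun r => φ (c * r) where
  monotoneOn := fun r hr s hs hrs =>
    hφ.monotoneOn (mul_nonneg hc.le hr) (mul_nonneg hc.le hs) (mul_le_mul_of_nonneg_left hrs hc.le)
  intervalIntegrable_div := fun l hl => by
    have hscaled := ((hφ.intervalIntegrable_div (c * l) (by positivity)).comp_mul_left
      (c := c)).const_mul c
    rw [zero_div, mul_div_cancel_left₀ l hc.ne'] at hscaled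
    refine hscaled.congr fun r _ => ?_
    rw [← div_div, mul_div_assoc', mul_div_cancel₀ _ hc.ne']

end IsDiniModulus

theorem norm_slope_le_div {g : ℝ → ℝ} {a t B : ℝ} (hat : a < t) (h : |g t - g a| ≤ B) :
    ‖slope g a t‖ ≤ B / (t - a) := by
  have hpos := sub_pos.2 hat
  rw [slope_def_field, norm_div, Real.norm_eq_abs, Real.norm_of_nonneg hpos.le]
  gcongr

section LocallyDini

variable {Z : Type*} [TopologicalSpace Z] {K : Set Z} {a : Z → ℝ} {b : ℝ} {f g : Z → ℝ → ℝ}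

/-- Locally uniformly in the parameter `z ∈ K`, the function `g z` satisfies a Dini condition at
the left end point `a z` of the interval `[a z, b]`. -/
def LocallyDini (g : Z → ℝ → ℝ) (a : Z → ℝ) (b : ℝ) (K : Set Z) : Prop :=
  ∀ z₀ ∈ K, ∃ φ, IsDiniModulus φ ∧
    ∀ᶠ z in 𝓝[K] z₀, ∀ t ∈ Icc (a z) b, |g z t - g z (a z)| ≤ φ (t - a z)

namespace LocallyDini

theorem intervalIntegrable_slope (hg : LocallyDini g a b K) {z : Z} (hz : z ∈ K) (hab : a z ≤ b)
    (hgc : ContinuousOn (g z) (Icc (a z) b)) :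
    IntervalIntegrable (slope (g z) (a z)) volume (a z) b := by
  obtain ⟨φ, hφ, hev⟩ := hg z hz
  have hmod := hev.self_of_nhdsWithin hz
  have hbound : IntervalIntegrable (fun t => φ (t - a z) / (t - a z)) volume (a z) b := by
    simpa only [zero_add, sub_add_cancel] using
      (hφ.intervalIntegrable_div (b - a z) (sub_nonneg.2 hab)).comp_sub_right (a z)
  refine hbound.mono_fun' (aestronglyMeasurable_slope hab hgc) ?_
  rw [uIoc_of_le hab]
  exact ae_restrict_of_forall_mem measurableSet_Ioc fun t ht =>
    norm_slope_le_div ht.1 (hmod t (Ioc_subset_Icc_self ht))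

theorem continuousOn_integral_slope [FirstCountableTopology Z] (hg : LocallyDini g a b K)
    (ha : ContinuousOn a K) (hab : ∀ z ∈ K, a z ≤ b)
    (hgc : ContinuousOn (Function.uncurry g) {p | p.1 ∈ K ∧ p.2 ∈ Icc (a p.1) b}) :
    ContinuousOn (fun z => ∫ t in a z..b, slope (g z) (a z) t) K := by
  intro z₀ hz₀
  obtain ⟨φ, hφ, hev⟩ := hg z₀ hz₀
  have hl : 0 < b - a z₀ + 1 := by linarith [hab z₀ hz₀]
  have hmem : ∀ z ∈ K, ∀ r ∈ Icc (0 : ℝ) 1, AffineMap.lineMap (a z) b r ∈ Icc (a z) b :=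
    fun z hz r hr => (convex_Icc (a z) b).lineMap_mem (left_mem_Icc.2 (hab z hz))
      (right_mem_Icc.2 (hab z hz)) hr
  rw [funext fun z => integral_slope_eq_integral_slope_comp_lineMap (g z) (a z) b]
  refine intervalIntegral.continuousWithinAt_of_dominated_interval ?_ ?_
    ((hφ.comp_const_mul hl).intervalIntegrable_div 1 zero_le_one) ?_
  · filter_upwards [self_mem_nhdsWithin] with z hz
    refine aestronglyMeasurable_slope zero_le_one ?_
    exact hgc.comp (f := fun r => (z, AffineMap.lineMap (a z) b r))
      (continuousOn_const.prodMk AffineMap.lineMap_continuous.continuousOn)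
      fun r hr => ⟨hz, hmem z hz r hr⟩
  · have hnear : ∀ᶠ z in 𝓝[K] z₀, a z₀ - 1 ≤ a z := (ha z₀ hz₀).eventually_const_le (by linarith)
    filter_upwards [hev, hnear, self_mem_nhdsWithin] with z hmod hz₁ hz
    refine .of_forall fun r hr => ?_
    rw [uIoc_of_le zero_le_one] at hr
    have hlen : AffineMap.lineMap (a z) b r - a z ≤ (b - a z₀ + 1) * r := by
      rw [AffineMap.lineMap_apply_ring', add_sub_cancel_right, mul_comm]
      exact mul_le_mul_of_nonneg_right (by linarith) hr.1.le
    have hline := hmem z hz r (Ioc_subset_Icc_self hr)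
    have hdiff := (hmod _ hline).trans (hφ.monotoneOn (sub_nonneg.2 hline.1)
      (mul_nonneg hl.le hr.1.le) hlen)
    simpa only [sub_zero] using norm_slope_le_div (g := g z ∘ AffineMap.lineMap (a z) b) hr.1
      (by simpa only [Function.comp_apply, AffineMap.lineMap_apply_zero] using hdiff)
  · refine .of_forall fun r hr => ?_
    rw [uIoc_of_le zero_le_one] at hr
    have hcont : ∀ r ∈ Icc (0 : ℝ) 1,
        ContinuousWithinAt (fun z => g z (AffineMap.lineMap (a z) b r)) K z₀ := fun r hr => by
      refine hgc.comp (f := fun z => (z, AffineMap.lineMap (a z) b r)) ?_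
        (fun z hz => ⟨hz, hmem z hz r hr⟩) z₀ hz₀
      simp only [AffineMap.lineMap_apply_ring']
      fun_prop
    exact (continuousWithinAt_const (b := (r - 0)⁻¹)).smul
      ((hcont r (Ioc_subset_Icc_self hr)).sub (hcont 0 (left_mem_Icc.2 zero_le_one)))

theorem exists_continuousOn_hasPF1Upper [FirstCountableTopology Z] (hg : LocallyDini g a b K)
    (ha : ContinuousOn a K) (hab : ∀ z ∈ K, a z ≤ b)
    (hgc : ContinuousOn (Function.uncurry g) {p | p.1 ∈ K ∧ p.2 ∈ Icc (a p.1) b}) :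
    ∃ u : Z → ℝ, ContinuousOn u K ∧
      ∀ z ∈ K, a z < b → HasPF1Upper (g z) (a z) b (g z (a z) * Real.log (b - a z) + u z) := by
  refine ⟨_, hg.continuousOn_integral_slope ha hab hgc, fun z hz hlt => ?_⟩
  have hgz : ContinuousOn (g z) (Icc (a z) b) :=
    hgc.comp (f := fun t => (z, t)) (by fun_prop) fun t ht => ⟨hz, ht⟩
  exact hasPF1Upper_of_intervalIntegrable_slope hlt (hg.intervalIntegrable_slope hz hlt.le hgz)

theorem mul (hf : LocallyDini f a b K) (hg : LocallyDini g a b K) (ha : ContinuousOn a K)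
    (hfa : ContinuousOn (fun z => f z (a z)) K) (hga : ContinuousOn (fun z => g z (a z)) K) :
    LocallyDini (fun z t => f z t * g z t) a b K := by
  intro z₀ hz₀
  obtain ⟨φ, hφ, hfφ⟩ := hf z₀ hz₀
  obtain ⟨χ, hχ, hgχ⟩ := hg z₀ hz₀
  set l := b - a z₀ + 1
  set M := |f z₀ (a z₀)| + 1
  set N := |g z₀ (a z₀)| + 1
  have hM_bound : ∀ᶠ z in 𝓝[K] z₀, |f z (a z)| ≤ M :=
    (hfa z₀ hz₀).abs.eventually_le_const (lt_add_one _)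
  have hN_bound : ∀ᶠ z in 𝓝[K] z₀, |g z (a z)| ≤ N :=
    (hga z₀ hz₀).abs.eventually_le_const (lt_add_one _)
  have hnear : ∀ᶠ z in 𝓝[K] z₀, a z₀ - 1 ≤ a z := (ha z₀ hz₀).eventually_const_le (by linarith)
  refine ⟨_, (hφ.const_mul (c := N + |χ l|) (by positivity)).add
    (hχ.const_mul (c := M) (by positivity)), ?_⟩
  filter_upwards [hfφ, hgχ, hM_bound, hN_bound, hnear] with z hfz hgz hMz hNz hz₁ t ht
  have hlen : 0 ≤ t - a z := sub_nonneg.2 ht.1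
  have hgt : |g z t| ≤ N + |χ l| := by
    have hχl : χ (t - a z) ≤ |χ l| :=
      (hχ.monotoneOn hlen (hlen.trans (by linarith [ht.2])) (by linarith [ht.2])).trans
        (le_abs_self _)
    linarith [abs_sub_abs_le_abs_sub (g z t) (g z (a z)), hgz t ht]
  calc |f z t * g z t - f z (a z) * g z (a z)|
      = |(f z t - f z (a z)) * g z t + f z (a z) * (g z t - g z (a z))| := by ring_nf
    _ ≤ |f z t - f z (a z)| * |g z t| + |f z (a z)| * |g z t - g z (a z)| := by
        rw [← abs_mul, ← abs_mul]
        exact abs_add_le _ _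
    _ ≤ (N + |χ l|) * φ (t - a z) + M * χ (t - a z) := by
        rw [mul_comm (N + |χ l|)]
        exact add_le_add
          (mul_le_mul (hfz t ht) hgt (abs_nonneg _) ((abs_nonneg _).trans (hfz t ht)))
          (mul_le_mul hMz (hgz t ht) (abs_nonneg _) (by positivity))

theorem of_hasDerivWithinAt {g' : Z → ℝ → ℝ} {c : ℝ} (hac : ∀ z ∈ K, a z ∈ Icc c b)
    (hg : ∀ z ∈ K, ∀ t ∈ Icc c b, HasDerivWithinAt (g z) (g' z t) (Icc c b) t)
    (hg' : ContinuousOn (Function.uncurry g') (K ×ˢ Icc c b)) : LocallyDini g a b K := by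
  intro z₀ hz₀
  obtain ⟨M, hM⟩ := isCompact_Icc.exists_bound_of_continuousOn
    (f := g' z₀) (hg'.uncurry_left z₀ hz₀)
  obtain ⟨v, hv, hclose⟩ := isCompact_Icc.mem_uniformity_of_prod hg' hz₀
    (Metric.dist_mem_uniformity one_pos)
  refine ⟨_, (IsDiniModulus.rpow one_pos).const_mul (c := |M| + 1) (by positivity), ?_⟩
  filter_upwards [hv, self_mem_nhdsWithin] with z hzv hz t ht
  have hbound : ∀ s ∈ Icc c b, ‖g' z s‖ ≤ |M| + 1 := fun s hs => by
    have hclose_s : ‖g' z s - g' z₀ s‖ < 1 := by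
      rw [← dist_eq_norm]
      exact hclose z hzv s hs
    linarith [norm_le_norm_add_norm_sub' (g' z s) (g' z₀ s), hM s hs, le_abs_self M]
  have h := (convex_Icc c b).norm_image_sub_le_of_norm_hasDerivWithin_le (hg z hz) hbound
    (hac z hz) ⟨(hac z hz).1.trans ht.1, ht.2⟩
  rwa [Real.norm_eq_abs, Real.norm_of_nonneg (sub_nonneg.2 ht.1), ← Real.rpow_one (t - a z)] at h

end LocallyDini

end LocallyDini

section Reflection

variable {F : Type*} [NormedAddCommGroup F] [InnerProductSpace ℝ F]

theorem continuousOn_reflection_orthogonal_singleton :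
    ContinuousOn (fun q : F × F => (ℝ ∙ q.1)ᗮ.reflection q.2) ({0}ᶜ ×ˢ univ) := by
  simp only [Submodule.reflection_orthogonal_apply, Submodule.reflection_singleton_apply]
  have hne : ∀ q ∈ ({0}ᶜ ×ˢ univ : Set (F × F)), ‖q.1‖ ^ 2 ≠ 0 := fun q hq =>
    pow_ne_zero 2 (norm_ne_zero_iff.2 hq.1)
  have hcoef : ContinuousOn (fun q : F × F => inner ℝ q.1 q.2 / ‖q.1‖ ^ 2) ({0}ᶜ ×ˢ univ) :=
    (continuousOn_fst.inner continuousOn_snd).div (continuousOn_fst.norm.pow 2) hne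
  exact (((hcoef.smul continuousOn_fst).const_smul 2).sub continuousOn_snd).neg

theorem exists_continuousOn_frame (B : F ≃ₗᵢ[ℝ] F) (e : F) :
    ∃ A : F → F ≃ₗᵢ[ℝ] F, (∀ ω, ‖ω‖ = ‖e‖ → A ω e = ω) ∧
      ContinuousOn (fun q : F × F => A q.1 q.2) ({B e}ᶜ ×ˢ univ) := by
  refine ⟨fun ω => B.trans (ℝ ∙ (B e - ω))ᗮ.reflection, fun ω hω => ?_, ?_⟩
  · rw [LinearIsometryEquiv.trans_apply]
    exact Submodule.reflection_sub ((B.norm_map e).trans hω.symm)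
  · have hmaps : MapsTo (fun q : F × F => (B e - q.1, B q.2)) ({B e}ᶜ ×ˢ univ) ({0}ᶜ ×ˢ univ) :=
      fun q hq => ⟨sub_ne_zero.2 (Ne.symm hq.1), mem_univ _⟩
    have hpair : Continuous fun q : F × F => (B e - q.1, B q.2) := by fun_prop
    have hcomp := continuousOn_reflection_orthogonal_singleton.comp hpair.continuousOn hmaps
    simpa only [LinearIsometryEquiv.trans_apply, Function.comp_def] using hcomp

end Reflection

theorem integral_comp_linearIsometryEquiv_circleMap {F : Type*} [NormedAddCommGroup F]
    [NormedSpace ℝ F] (f : ℂ ≃ₗᵢ[ℝ] ℂ) (r : ℝ) (h : ℂ → F) :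
    ∫ s in (0 : ℝ)..2 * π, h (f (circleMap 0 r s)) =
      ∫ s in (0 : ℝ)..2 * π, h (circleMap 0 r s) := by
  have hshift : ∀ d : ℝ, ∫ s in d..d + 2 * π, h (circleMap 0 r s) =
      ∫ s in (0 : ℝ)..2 * π, h (circleMap 0 r s) := fun d => by
    have := ((periodic_circleMap 0 r).comp h).intervalIntegral_add_eq d 0
    rwa [zero_add] at this
  have hrot : ∀ (d s : ℝ), rotation (Circle.exp d) (circleMap 0 r s) = circleMap 0 r (d + s) :=
    fun d s => by
      rw [rotation_apply, Circle.coe_exp, circleMap_zero, circleMap_zero, mul_left_comm,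
        ← Complex.exp_add, ← add_mul, Complex.ofReal_add]
  obtain ⟨a, hf⟩ := linear_isometry_complex f
  rw [← Circle.exp_arg a] at hf
  generalize Complex.arg a = d at hf
  obtain rfl | rfl := hf
  · simp only [hrot]
    rw [intervalIntegral.integral_comp_add_left (fun s => h (circleMap 0 r s)), add_zero, hshift]
  · simp only [LinearIsometryEquiv.trans_apply, Complex.conjLIE_apply, conj_circleMap_zero, hrot,
      ← sub_eq_add_neg]
    rw [intervalIntegral.integral_comp_sub_left (fun s => h (circleMap 0 r s)), sub_zero,
      ← hshift (d - 2 * π), sub_add_cancel]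

/-- The isometric embedding of the complex plane onto the horizontal plane `e₃ᗮ`. -/
def horizontal : ℂ →ₗᵢ[ℝ] E3 where
  toFun z := vec3 z.re z.im 0
  map_add' z w := by
    ext i
    fin_cases i <;> simp [vec3]
  map_smul' c z := by
    ext i
    fin_cases i <;> simp [vec3]
  norm_map' z := by
    simp [vec3, EuclideanSpace.norm_eq, Fin.sum_univ_three, Complex.norm_def,
      Complex.normSq_apply, sq]

/-- The point of longitude `s` on the parallel of height `c` of the unit sphere, so that
`gam R E' E ω s = R ω (parallel (mu E' E) s)`. -/
def parallel (c s : ℝ) : E3 :=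
  vec3 (Real.sqrt (1 - c ^ 2) * Real.cos s) (Real.sqrt (1 - c ^ 2) * Real.sin s) c

theorem inner_e₃ (v : E3) : inner ℝ v e₃ = v 2 := by
  rw [e₃, EuclideanSpace.inner_single_right, one_mul, conj_trivial]

theorem norm_e₃ : ‖e₃‖ = 1 := by simp [e₃]

theorem horizontal_of_inner_e₃_eq_zero {v : E3} (hv : inner ℝ v e₃ = 0) :
    horizontal ⟨v 0, v 1⟩ = v := by
  rw [inner_e₃] at hv
  ext i
  fin_cases i <;> simp [horizontal, vec3, hv]

theorem inner_horizontal_e₃ (z : ℂ) : inner ℝ (horizontal z) e₃ = 0 := by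
  simp [inner_e₃, horizontal, vec3]

theorem parallel_eq (c s : ℝ) :
    parallel c s = horizontal (circleMap 0 (√(1 - c ^ 2)) s) + c • e₃ := by
  ext i
  fin_cases i <;> simp [parallel, horizontal, vec3, e₃, circleMap, Complex.exp_re, Complex.exp_im]

theorem continuous_parallel : Continuous fun p : ℝ × ℝ => parallel p.1 p.2 := by
  simp only [parallel_eq]
  unfold circleMap
  fun_prop

theorem norm_parallel {c : ℝ} (hc : c ∈ Icc (-1) 1) (s : ℝ) : ‖parallel c s‖ = 1 := by
  have hr : 0 ≤ 1 - c ^ 2 := sub_nonneg.2 ((sq_le_one_iff_abs_le_one c).2 (abs_le.2 hc))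
  have horth : inner ℝ (horizontal (circleMap 0 (√(1 - c ^ 2)) s)) (c • e₃) = 0 := by
    rw [inner_smul_right, inner_horizontal_e₃, mul_zero]
  rw [← pow_eq_one_iff_of_nonneg (norm_nonneg _) two_ne_zero, parallel_eq, norm_add_sq_real, horth,
    horizontal.norm_map, norm_circleMap_zero, sq_abs, Real.sq_sqrt hr, norm_smul, norm_e₃,
    Real.norm_eq_abs, mul_one, sq_abs]
  ring

theorem norm_parallel_sub_e₃_sq {c : ℝ} (hc : c ∈ Icc (-1) 1) (s : ℝ) :
    ‖parallel c s - e₃‖ ^ 2 = 2 * (1 - c) := by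
  have hinner : inner ℝ (parallel c s) e₃ = c := inner_e₃ _
  rw [norm_sub_sq_real, norm_parallel hc, norm_e₃, hinner]
  ring

theorem exists_horizontal_of_map_e₃ (T : E3 ≃ₗᵢ[ℝ] E3) (hT : T e₃ = e₃) :
    ∃ f : ℂ ≃ₗᵢ[ℝ] ℂ, ∀ z, T (horizontal z) = horizontal (f z) := by
  have himage : ∀ z, horizontal ⟨T (horizontal z) 0, T (horizontal z) 1⟩ = T (horizontal z) :=
    fun z => horizontal_of_inner_e₃_eq_zero <| by
      rw [← hT, LinearIsometryEquiv.inner_map_map, inner_horizontal_e₃]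
  let f : ℂ →ₗᵢ[ℝ] ℂ :=
    { toFun := fun z => ⟨T (horizontal z) 0, T (horizontal z) 1⟩
      map_add' := fun z w => by simp [Complex.ext_iff]
      map_smul' := fun c z => by
        simp only [map_smul]
        simp [Complex.ext_iff]
      norm_map' := fun z => by
        rw [← horizontal.norm_map]
        change ‖horizontal ⟨T (horizontal z) 0, T (horizontal z) 1⟩‖ = _
        rw [himage, LinearIsometryEquiv.norm_map, horizontal.norm_map] }
  exact ⟨f.toLinearIsometryEquiv rfl, fun z => (himage z).symm⟩

section ParallelIntegral

variable {F : Type*} [NormedAddCommGroup F] [NormedSpace ℝ F]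

theorem integral_comp_parallel_eq_of_map_e₃_eq {A B : E3 ≃ₗᵢ[ℝ] E3} (hAB : A e₃ = B e₃) (c : ℝ)
    (h : E3 → F) :
    ∫ s in (0 : ℝ)..2 * π, h (A (parallel c s)) = ∫ s in (0 : ℝ)..2 * π, h (B (parallel c s)) := by
  have hfix : (A.trans B.symm) e₃ = e₃ := by
    rw [LinearIsometryEquiv.trans_apply, hAB, B.symm_apply_apply]
  obtain ⟨f, hf⟩ := exists_horizontal_of_map_e₃ (A.trans B.symm) hfix
  have hA : ∀ v, A v = B ((A.trans B.symm) v) := fun v => (B.apply_symm_apply _).symm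
  have hparallel : ∀ s, A (parallel c s) =
      B (horizontal (f (circleMap 0 (√(1 - c ^ 2)) s)) + c • e₃) := fun s => by
    rw [hA, parallel_eq, map_add, map_smul, hf, hfix]
  simp only [hparallel]
  rw [integral_comp_linearIsometryEquiv_circleMap f _ fun z => h (B (horizontal z + c • e₃))]
  simp only [parallel_eq]

theorem continuousOn_intervalIntegral_of_continuousOn_prod_univ {P : Type*} [TopologicalSpace P]
    {D : Set P} {f : P → ℝ → F} (hf : ContinuousOn (Function.uncurry f) (D ×ˢ univ)) (a b : ℝ) :
    ContinuousOn (fun p => ∫ s in a..b, f p s) D := by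
  rw [continuousOn_iff_continuous_domRestrict]
  refine intervalIntegral.continuous_parametric_intervalIntegral_of_continuous'
    (f := fun (p : D) s => f p s) ?_ a b
  exact hf.comp_continuous (f := fun q : D × ℝ => ((q.1 : P), q.2)) (by fun_prop)
    fun q => ⟨q.1.2, mem_univ _⟩

variable {Y : Type*} [TopologicalSpace Y] {K : Set Y} {f : Y → E3 → F}

theorem continuousOn_integral_comp_parallel_of_continuousOn {A : E3 → E3 ≃ₗᵢ[ℝ] E3} {U : Set E3}
    (hf : ContinuousOn (Function.uncurry f) (K ×ˢ sphere 0 1))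
    (hA : ContinuousOn (fun q : E3 × E3 => A q.1 q.2) (U ×ˢ univ)) :
    ContinuousOn (fun p : Y × E3 × ℝ => ∫ s in (0 : ℝ)..2 * π, f p.1 (A p.2.1 (parallel p.2.2 s)))
      (K ×ˢ U ×ˢ Icc (-1) 1) := by
  have hpoint : ContinuousOn (fun q : (Y × E3 × ℝ) × ℝ => A q.1.2.1 (parallel q.1.2.2 q.2))
      ((K ×ˢ U ×ˢ Icc (-1) 1) ×ˢ univ) := by
    have hparallel : Continuous fun q : (Y × E3 × ℝ) × ℝ => parallel q.1.2.2 q.2 :=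
      continuous_parallel.comp (continuous_fst.snd.snd.prodMk continuous_snd)
    exact hA.comp (continuous_fst.snd.fst.prodMk hparallel).continuousOn
      fun q hq => ⟨hq.1.2.1, mem_univ _⟩
  have hintegrand : ContinuousOn
      (fun q : (Y × E3 × ℝ) × ℝ => f q.1.1 (A q.1.2.1 (parallel q.1.2.2 q.2)))
      ((K ×ˢ U ×ˢ Icc (-1) 1) ×ˢ univ) :=
    hf.comp (continuousOn_fst.fst.prodMk hpoint) fun q hq => ⟨hq.1.1, by
      rw [mem_sphere_zero_iff_norm, LinearIsometryEquiv.norm_map, norm_parallel hq.1.2.2]⟩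
  exact continuousOn_intervalIntegral_of_continuousOn_prod_univ hintegrand 0 (2 * π)

theorem continuousOn_integral_comp_parallel {R : E3 → E3 ≃ₗᵢ[ℝ] E3}
    (hf : ContinuousOn (Function.uncurry f) (K ×ˢ sphere 0 1)) (hR : ∀ ω, ‖ω‖ = 1 → R ω e₃ = ω) :
    ContinuousOn (fun p : Y × E3 × ℝ => ∫ s in (0 : ℝ)..2 * π, f p.1 (R p.2.1 (parallel p.2.2 s)))
      (K ×ˢ sphere 0 1 ×ˢ Icc (-1) 1) := by
  rintro ⟨y₀, ω₀, c₀⟩ ⟨hy₀, hω₀, hc₀⟩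
  have hne : ω₀ ≠ -ω₀ := fun h => ne_neg_of_mem_unit_sphere ℝ ⟨ω₀, hω₀⟩ (Subtype.ext h)
  have hnorm₀ : ‖-ω₀‖ = 1 := by rwa [norm_neg, ← mem_sphere_zero_iff_norm]
  obtain ⟨A, hA_e₃, hA⟩ := exists_continuousOn_frame (R (-ω₀)) e₃
  rw [hR _ hnorm₀] at hA
  have hintegral : EqOn
      (fun p : Y × E3 × ℝ => ∫ s in (0 : ℝ)..2 * π, f p.1 (R p.2.1 (parallel p.2.2 s)))
      (fun p => ∫ s in (0 : ℝ)..2 * π, f p.1 (A p.2.1 (parallel p.2.2 s)))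
      (K ×ˢ (sphere 0 1 ∩ {-ω₀}ᶜ) ×ˢ Icc (-1) 1) := fun p hp => by
    have hω := mem_sphere_zero_iff_norm.1 hp.2.1.1
    exact integral_comp_parallel_eq_of_map_e₃_eq
      ((hR _ hω).trans (hA_e₃ _ (hω.trans norm_e₃.symm)).symm) _ _
  have hlocal := ((continuousOn_integral_comp_parallel_of_continuousOn hf hA).mono
    (prod_mono_right (prod_mono_left inter_subset_right))).congr hintegral
  refine (hlocal (y₀, ω₀, c₀) ⟨hy₀, ⟨hω₀, hne⟩, hc₀⟩).mono_of_mem_nhdsWithin ?_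
  filter_upwards [self_mem_nhdsWithin, mem_nhdsWithin_of_mem_nhds
    ((isOpen_ne.preimage continuous_snd.fst).mem_nhds hne)] with p hp hpne
  exact ⟨hp.1, ⟨hp.2.1, hpne⟩, hp.2.2⟩

end ParallelIntegral

section Mu

variable {E₀ E E' : ℝ}

theorem mu_mem_Icc (hE : 0 < E) (hEE' : E ≤ E') : mu E' E ∈ Icc (-1) 1 := by
  have hE' := hE.trans_le hEE'
  refine ⟨neg_one_lt_zero.le.trans (Real.sqrt_nonneg _),
    Real.sqrt_le_one.2 ((div_le_one (by positivity)).2 ?_)⟩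
  linarith

theorem one_sub_mu_le (hE₀ : 0 < E₀) (hE : E₀ ≤ E) (hEE' : E ≤ E') :
    1 - mu E' E ≤ (E' - E) / E₀ := by
  have hEpos := hE₀.trans_le hE
  have hE'pos := hEpos.trans_le hEE'
  have hmu : 0 ≤ mu E' E := Real.sqrt_nonneg _
  calc 1 - mu E' E ≤ 1 - mu E' E ^ 2 := by nlinarith [(mu_mem_Icc hEpos hEE').2]
    _ = 2 * (E' - E) / (E' * (E + 2)) := by
        rw [mu, Real.sq_sqrt (by positivity), eq_div_iff (by positivity), sub_mul,
          div_mul_cancel₀ _ (by positivity)]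
        ring
    _ ≤ 2 * (E' - E) / (E₀ * 2) := by
        have := sub_nonneg.2 hEE'
        gcongr <;> linarith
    _ = (E' - E) / E₀ := by rw [mul_comm E₀, mul_div_mul_left _ _ two_ne_zero]

theorem continuousOn_mu : ContinuousOn (fun p : ℝ × ℝ => mu p.1 p.2) (Ioi 0 ×ˢ Ioi 0) := by
  refine Real.continuous_sqrt.comp_continuousOn (ContinuousOn.div (by fun_prop) (by fun_prop) ?_)
  rintro ⟨s, t⟩ ⟨hs : 0 < s, ht : 0 < t⟩
  positivity

end Mu

section Gam

variable {R : E3 → E3 ≃ₗᵢ[ℝ] E3} {ω : E3} {E₀ E E' : ℝ}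

theorem norm_gam (hE : 0 < E) (hEE' : E ≤ E') (s : ℝ) : ‖gam R E' E ω s‖ = 1 :=
  ((R ω).norm_map _).trans (norm_parallel (mu_mem_Icc hE hEE') s)

theorem norm_gam_sub_le (hRω : R ω e₃ = ω) (hE₀ : 0 < E₀) (hE : E₀ ≤ E) (hEE' : E ≤ E') (s : ℝ) :
    ‖gam R E' E ω s - ω‖ ≤ √(2 / E₀ * (E' - E)) := by
  have hdiff : gam R E' E ω s - ω = R ω (parallel (mu E' E) s - e₃) := by
    rw [map_sub, hRω]
    rfl
  rw [hdiff, LinearIsometryEquiv.norm_map]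
  refine Real.le_sqrt_of_sq_le ?_
  rw [norm_parallel_sub_e₃_sq (mu_mem_Icc (hE₀.trans_le hE) hEE'), div_mul_comm, mul_comm]
  exact mul_le_mul_of_nonneg_right (one_sub_mu_le hE₀ hE hEE') zero_le_two

theorem gam_self (hRω : R ω e₃ = ω) (hE : 0 < E) (s : ℝ) : gam R E E ω s = ω := by
  have h := norm_gam_sub_le hRω hE le_rfl le_rfl s
  rwa [sub_self, mul_zero, Real.sqrt_zero, norm_le_zero_iff, sub_eq_zero] at h

theorem continuous_gam (E' E : ℝ) : Continuous (gam R E' E ω) :=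
  (R ω).continuous.comp (continuous_parallel.comp (Continuous.prodMk_right (mu E' E)))

end Gam

theorem norm_intervalIntegral_sub_smul_le {F : Type*} [NormedAddCommGroup F] [NormedSpace ℝ F]
    [CompleteSpace F] {f : ℝ → F} {a b B : ℝ} (hf : IntervalIntegrable f volume a b) {v : F}
    (hB : ∀ s ∈ uIoc a b, ‖f s - v‖ ≤ B) :
    ‖(∫ s in a..b, f s) - (b - a) • v‖ ≤ B * |b - a| := by
  rw [← intervalIntegral.integral_const,
    ← intervalIntegral.integral_sub hf intervalIntegrable_const]
  exact intervalIntegral.norm_integral_le_of_norm_le_const hB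

section ScatteringIntegral

variable {X : Type*} {K : Set X} {E₀ Em : ℝ} {R : E3 → E3 ≃ₗᵢ[ℝ] E3} {ψ : X → E3 → ℝ → ℝ}

/-- The integral of `ψ` over the circle of directions in which a particle of energy `E'` is
scattered to the state `z = (x, ω, E)`. -/
def scatteringIntegral (R : E3 → E3 ≃ₗᵢ[ℝ] E3) (ψ : X → E3 → ℝ → ℝ) (z : X × E3 × ℝ) (E' : ℝ) :
    ℝ :=
  ∫ s in (0 : ℝ)..2 * π, ψ z.1 (gam R E' z.2.2 z.2.1 s) E'

theorem scatteringIntegral_self (hR : ∀ ω, ‖ω‖ = 1 → R ω e₃ = ω) {x : X} {ω : E3}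
    (hω : ω ∈ sphere 0 1) {E : ℝ} (hE : 0 < E) :
    scatteringIntegral R ψ (x, ω, E) E = 2 * π * ψ x ω E := by
  have hRω := hR ω (mem_sphere_zero_iff_norm.1 hω)
  simp only [scatteringIntegral, gam_self hRω hE, intervalIntegral.integral_const, sub_zero,
    smul_eq_mul]

variable [TopologicalSpace X]

theorem continuousOn_scatteringIntegral (hE₀ : 0 < E₀)
    (hψ : ContinuousOn (fun p : X × E3 × ℝ => ψ p.1 p.2.1 p.2.2) (K ×ˢ sphere 0 1 ×ˢ Icc E₀ Em))
    (hR : ∀ ω, ‖ω‖ = 1 → R ω e₃ = ω) :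
    ContinuousOn (Function.uncurry (scatteringIntegral R ψ))
      {p | p.1 ∈ K ×ˢ sphere 0 1 ×ˢ Icc E₀ Em ∧ p.2 ∈ Icc p.1.2.2 Em} := by
  have hswap : ContinuousOn (Function.uncurry fun (y : X × ℝ) ω => ψ y.1 ω y.2)
      ((K ×ˢ Icc E₀ Em) ×ˢ sphere 0 1) :=
    hψ.comp (f := fun q : (X × ℝ) × E3 => (q.1.1, q.2, q.1.2)) (by fun_prop)
      fun q hq => ⟨hq.1.1, hq.2, hq.1.2⟩
  have hmu : ContinuousOn (fun p : (X × E3 × ℝ) × ℝ => mu p.2 p.1.2.2)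
      {p | p.1 ∈ K ×ˢ sphere 0 1 ×ˢ Icc E₀ Em ∧ p.2 ∈ Icc p.1.2.2 Em} :=
    continuousOn_mu.comp (f := fun p : (X × E3 × ℝ) × ℝ => (p.2, p.1.2.2)) (by fun_prop)
      fun p hp => ⟨hE₀.trans_le (hp.1.2.2.1.trans hp.2.1), hE₀.trans_le hp.1.2.2.1⟩
  exact (continuousOn_integral_comp_parallel hswap hR).comp
    (f := fun p : (X × E3 × ℝ) × ℝ => ((p.1.1, p.2), p.1.2.1, mu p.2 p.1.2.2))
    ((by fun_prop : Continuous _).continuousOn.prodMk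
      ((by fun_prop : Continuous _).continuousOn.prodMk hmu))
    fun p hp => ⟨⟨hp.1.1, hp.1.2.2.1.trans hp.2.1, hp.2.2⟩, hp.1.2.1,
      mu_mem_Icc (hE₀.trans_le hp.1.2.2.1) hp.2.1⟩

theorem abs_scatteringIntegral_sub_le {α β Cα Cβ : ℝ} (hE₀ : 0 < E₀) (hα : 0 ≤ α)
    (hψ : ContinuousOn (fun p : X × E3 × ℝ => ψ p.1 p.2.1 p.2.2) (K ×ˢ sphere 0 1 ×ˢ Icc E₀ Em))
    (hψα : ∀ x ∈ K, ∀ E ∈ Icc E₀ Em, ∀ ω₁ ∈ sphere (0 : E3) 1, ∀ ω₂ ∈ sphere (0 : E3) 1,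
      |ψ x ω₁ E - ψ x ω₂ E| ≤ Cα * ‖ω₁ - ω₂‖ ^ α)
    (hψβ : ∀ x ∈ K, ∀ ω ∈ sphere (0 : E3) 1, ∀ E₁ ∈ Icc E₀ Em, ∀ E₂ ∈ Icc E₀ Em,
      |ψ x ω E₁ - ψ x ω E₂| ≤ Cβ * |E₁ - E₂| ^ β)
    (hR : ∀ ω, ‖ω‖ = 1 → R ω e₃ = ω) {z : X × E3 × ℝ} (hz : z ∈ K ×ˢ sphere 0 1 ×ˢ Icc E₀ Em)
    {E' : ℝ} (hE'_mem : E' ∈ Icc z.2.2 Em) :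
    |scatteringIntegral R ψ z E' - scatteringIntegral R ψ z z.2.2| ≤
      2 * π * (|Cα| * (2 / E₀ * (E' - z.2.2)) ^ (α / 2) + |Cβ| * (E' - z.2.2) ^ β) := by
  obtain ⟨x, ω, E⟩ := z
  obtain ⟨hx, hω, hE⟩ := hz
  obtain ⟨hEE', hE'm⟩ := hE'_mem
  change E ≤ E' at hEE'
  have hEpos := hE₀.trans_le hE.1
  have hE' : E' ∈ Icc E₀ Em := ⟨hE.1.trans hEE', hE'm⟩
  have hRω := hR ω (mem_sphere_zero_iff_norm.1 hω)
  have hgam : ∀ s, gam R E' E ω s ∈ sphere (0 : E3) 1 := fun s =>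
    mem_sphere_zero_iff_norm.2 (norm_gam hEpos hEE' s)
  have hangle : ∀ s, |ψ x (gam R E' E ω s) E' - ψ x ω E'| ≤
      |Cα| * (2 / E₀ * (E' - E)) ^ (α / 2) := fun s => by
    calc |ψ x (gam R E' E ω s) E' - ψ x ω E'|
        ≤ |Cα| * ‖gam R E' E ω s - ω‖ ^ α :=
          (hψα x hx E' hE' _ (hgam s) ω hω).trans (by gcongr; exact le_abs_self Cα)
      _ ≤ |Cα| * √(2 / E₀ * (E' - E)) ^ α := by
          gcongr
          exact norm_gam_sub_le hRω hE₀ hE.1 hEE' s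
      _ = |Cα| * (2 / E₀ * (E' - E)) ^ (α / 2) := by
          rw [Real.rpow_div_two_eq_sqrt _ (mul_nonneg (by positivity) (sub_nonneg.2 hEE'))]
  have henergy : |ψ x ω E' - ψ x ω E| ≤ |Cβ| * (E' - E) ^ β := by
    have h := hψβ x hx ω hω E' hE' E hE
    rw [abs_of_nonneg (sub_nonneg.2 hEE')] at h
    exact h.trans (mul_le_mul_of_nonneg_right (le_abs_self Cβ)
      (Real.rpow_nonneg (sub_nonneg.2 hEE') β))
  have hcont : Continuous fun s => ψ x (gam R E' E ω s) E' :=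
    hψ.comp_continuous (f := fun s => (x, gam R E' E ω s, E'))
      (continuous_const.prodMk ((continuous_gam E' E).prodMk continuous_const))
      fun s => ⟨hx, hgam s, hE'⟩
  have hintegral := norm_intervalIntegral_sub_smul_le (hcont.intervalIntegrable 0 (2 * π))
    fun s _ => (norm_sub_le_norm_sub_add_norm_sub _ (ψ x ω E') _).trans
      (add_le_add (hangle s) henergy)
  rwa [sub_zero, abs_of_pos Real.two_pi_pos, mul_comm _ (2 * π), smul_eq_mul, Real.norm_eq_abs,
    ← scatteringIntegral_self hR hω hEpos] at hintegral

theorem locallyDini_scatteringIntegral {α β Cα Cβ : ℝ} (hE₀ : 0 < E₀) (hα : 0 < α) (hβ : 0 < β)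
    (hψ : ContinuousOn (fun p : X × E3 × ℝ => ψ p.1 p.2.1 p.2.2) (K ×ˢ sphere 0 1 ×ˢ Icc E₀ Em))
    (hψα : ∀ x ∈ K, ∀ E ∈ Icc E₀ Em, ∀ ω₁ ∈ sphere (0 : E3) 1, ∀ ω₂ ∈ sphere (0 : E3) 1,
      |ψ x ω₁ E - ψ x ω₂ E| ≤ Cα * ‖ω₁ - ω₂‖ ^ α)
    (hψβ : ∀ x ∈ K, ∀ ω ∈ sphere (0 : E3) 1, ∀ E₁ ∈ Icc E₀ Em, ∀ E₂ ∈ Icc E₀ Em,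
      |ψ x ω E₁ - ψ x ω E₂| ≤ Cβ * |E₁ - E₂| ^ β)
    (hR : ∀ ω, ‖ω‖ = 1 → R ω e₃ = ω) :
    LocallyDini (scatteringIntegral R ψ) (fun z => z.2.2) Em (K ×ˢ sphere 0 1 ×ˢ Icc E₀ Em) := by
  have hφ : IsDiniModulus fun r => 2 * π * (|Cα| * (2 / E₀ * r) ^ (α / 2) + |Cβ| * r ^ β) :=
    ((((IsDiniModulus.rpow (half_pos hα)).comp_const_mul (by positivity)).const_mul
      (abs_nonneg Cα)).add ((IsDiniModulus.rpow hβ).const_mul (abs_nonneg Cβ))).const_mul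
      Real.two_pi_pos.le
  refine fun _ _ => ⟨_, hφ, ?_⟩
  filter_upwards [self_mem_nhdsWithin] with z hz E' hE'
  exact abs_scatteringIntegral_sub_le hE₀ hα.le hψ hψα hψβ hR hz hE'

end ScatteringIntegral

theorem stmt11_general {X : Type*} [TopologicalSpace X] [FirstCountableTopology X] (K : Set X)
    (E₀ Em α β : ℝ) (hE₀ : 0 < E₀) (hα : 0 < α) (hβ : 0 < β) (σ₁ σ₁' : X → ℝ → ℝ → ℝ)
    (hσc : ContinuousOn (fun p : X × ℝ × ℝ => σ₁ p.1 p.2.1 p.2.2)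
      (K ×ˢ Icc E₀ Em ×ˢ Icc E₀ Em))
    (hσd : ∀ x ∈ K, ∀ E ∈ Icc E₀ Em, ∀ E' ∈ Icc E₀ Em,
      HasDerivWithinAt (fun s => σ₁ x s E) (σ₁' x E' E) (Icc E₀ Em) E')
    (hσ'c : ContinuousOn (fun p : X × ℝ × ℝ => σ₁' p.1 p.2.1 p.2.2)
      (K ×ˢ Icc E₀ Em ×ˢ Icc E₀ Em))
    (ψ : X → E3 → ℝ → ℝ) (Cα Cβ : ℝ)
    (hψc : ContinuousOn (fun p : X × E3 × ℝ => ψ p.1 p.2.1 p.2.2)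
      (K ×ˢ sphere (0 : E3) 1 ×ˢ Icc E₀ Em))
    (hψα : ∀ x ∈ K, ∀ E ∈ Icc E₀ Em, ∀ ω₁ ∈ sphere (0 : E3) 1, ∀ ω₂ ∈ sphere (0 : E3) 1,
      |ψ x ω₁ E - ψ x ω₂ E| ≤ Cα * ‖ω₁ - ω₂‖ ^ α)
    (hψβ : ∀ x ∈ K, ∀ ω ∈ sphere (0 : E3) 1, ∀ E₁ ∈ Icc E₀ Em, ∀ E₂ ∈ Icc E₀ Em,
      |ψ x ω E₁ - ψ x ω E₂| ≤ Cβ * |E₁ - E₂| ^ β)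
    (R : E3 → (E3 ≃ₗᵢ[ℝ] E3)) (hR : ∀ ω : E3, ‖ω‖ = 1 → R ω e₃ = ω) :
    ∃ u : X → E3 → ℝ → ℝ,
      ContinuousOn (fun p : X × E3 × ℝ => u p.1 p.2.1 p.2.2) (K ×ˢ sphere 0 1 ×ˢ Icc E₀ Em) ∧
      ∀ x ∈ K, ∀ ω ∈ sphere (0 : E3) 1, ∀ E ∈ Ico E₀ Em,
        HasPF1Upper
          (fun E' => σ₁ x E' E * ∫ s in (0 : ℝ)..(2 * π), ψ x (gam R E' E ω s) E') E Em
          (2 * π * Real.log (Em - E) * σ₁ x E E * ψ x ω E + u x ω E) := by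
  let a : X × E3 × ℝ → ℝ := fun z => z.2.2
  let σ : X × E3 × ℝ → ℝ → ℝ := fun z t => σ₁ z.1 t z.2.2
  let D : Set (X × E3 × ℝ) := K ×ˢ sphere 0 1 ×ˢ Icc E₀ Em
  have ha : ContinuousOn a D := by fun_prop
  have hσ : ContinuousOn (Function.uncurry σ) (D ×ˢ Icc E₀ Em) :=
    hσc.comp (f := fun p : (X × E3 × ℝ) × ℝ => (p.1.1, p.2, p.1.2.2)) (by fun_prop)
      fun p hp => ⟨hp.1.1, hp.2, hp.1.2.2⟩
  have hσ' : ContinuousOn (Function.uncurry fun (z : X × E3 × ℝ) t => σ₁' z.1 t z.2.2)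
      (D ×ˢ Icc E₀ Em) :=
    hσ'c.comp (f := fun p : (X × E3 × ℝ) × ℝ => (p.1.1, p.2, p.1.2.2)) (by fun_prop)
      fun p hp => ⟨hp.1.1, hp.2, hp.1.2.2⟩
  have hσDini : LocallyDini σ a Em D :=
    .of_hasDerivWithinAt (fun z hz => hz.2.2) (fun z hz => hσd z.1 hz.1 z.2.2 hz.2.2) hσ'
  have hψDini : LocallyDini (scatteringIntegral R ψ) a Em D :=
    locallyDini_scatteringIntegral hE₀ hα hβ hψc hψα hψβ hR
  have hψcont := continuousOn_scatteringIntegral hE₀ hψc hR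
  have hσdiag : ContinuousOn (fun z => σ z (a z)) D :=
    hσ.comp (f := fun z => (z, a z)) (by fun_prop) fun z hz => ⟨hz, hz.2.2⟩
  have hψdiag : ContinuousOn (fun z => scatteringIntegral R ψ z (a z)) D :=
    hψcont.comp (f := fun z => (z, a z)) (by fun_prop) fun z hz => ⟨hz, le_rfl, hz.2.2.2⟩
  obtain ⟨u, hu, hpf⟩ := (hσDini.mul hψDini ha hσdiag hψdiag).exists_continuousOn_hasPF1Upper ha
    (fun z hz => hz.2.2.2)
    ((hσ.mono fun p hp => ⟨hp.1, hp.1.2.2.1.trans hp.2.1, hp.2.2⟩).mul hψcont)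
  refine ⟨fun x ω E => u (x, ω, E), hu, fun x hx ω hω E hE => ?_⟩
  have hfp := hpf (x, ω, E) ⟨hx, hω, Ico_subset_Icc_self hE⟩ hE.2
  rw [scatteringIntegral_self hR hω (hE₀.trans_le hE.1)] at hfp
  convert! hfp using 2
  ring

/-- for `σ̂₁ ∈ C(Ḡ×I, C¹(I'))` and
`ψ ∈ C(Ḡ×I, C^α(S)) ∩ C(Ḡ×S, C^β(I))`, there exists `u ∈ C(Ḡ×S×I)` with
`p.f.∫_E^{E_m} σ̂₁(x,E',E)( ∫_0^{2π} ψ(x,γ(E',E,ω)(s),E') ds )/(E'−E) dE'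
  = 2π·log(E_m−E)·σ̂₁(x,E,E)·ψ(x,ω,E) + u(x,ω,E)`. -/
theorem stmt11 (G : Set E3) (hGopen : IsOpen G) (hGbdd : Bornology.IsBounded G)
    (E₀ Em α β : ℝ) (hE₀ : 0 < E₀) (hI : E₀ < Em)
    (hα : 0 < α) (hα1 : α < 1) (hβ : 0 < β) (hβ1 : β < 1)
    (σ₁ σ₁' : E3 → ℝ → ℝ → ℝ)
    (hσc : ContinuousOn (fun p : E3 × ℝ × ℝ => σ₁ p.1 p.2.1 p.2.2)
      (closure G ×ˢ Set.Icc E₀ Em ×ˢ Set.Icc E₀ Em))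
    (hσd : ∀ x ∈ closure G, ∀ E ∈ Set.Icc E₀ Em, ∀ E' ∈ Set.Icc E₀ Em,
      HasDerivWithinAt (fun s => σ₁ x s E) (σ₁' x E' E) (Set.Icc E₀ Em) E')
    (hσ'c : ContinuousOn (fun p : E3 × ℝ × ℝ => σ₁' p.1 p.2.1 p.2.2)
      (closure G ×ˢ Set.Icc E₀ Em ×ˢ Set.Icc E₀ Em))
    (ψ : E3 → E3 → ℝ → ℝ) (Cα Cβ : ℝ)
    (hψc : ContinuousOn (fun p : E3 × E3 × ℝ => ψ p.1 p.2.1 p.2.2)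
      (closure G ×ˢ sphere (0 : E3) 1 ×ˢ Set.Icc E₀ Em))
    (hψα : ∀ x ∈ closure G, ∀ E ∈ Set.Icc E₀ Em, ∀ ω₁ ∈ sphere (0 : E3) 1,
      ∀ ω₂ ∈ sphere (0 : E3) 1, |ψ x ω₁ E - ψ x ω₂ E| ≤ Cα * ‖ω₁ - ω₂‖ ^ α)
    (hψβ : ∀ x ∈ closure G, ∀ ω ∈ sphere (0 : E3) 1, ∀ E₁ ∈ Set.Icc E₀ Em,
      ∀ E₂ ∈ Set.Icc E₀ Em, |ψ x ω E₁ - ψ x ω E₂| ≤ Cβ * |E₁ - E₂| ^ β)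
    (R : E3 → (E3 ≃ₗᵢ[ℝ] E3)) (hR : ∀ ω : E3, ‖ω‖ = 1 → R ω e₃ = ω) :
    ∃ u : E3 → E3 → ℝ → ℝ,
      ContinuousOn (fun p : E3 × E3 × ℝ => u p.1 p.2.1 p.2.2)
        (closure G ×ˢ sphere (0 : E3) 1 ×ˢ Set.Icc E₀ Em) ∧
      ∀ x ∈ closure G, ∀ ω ∈ sphere (0 : E3) 1, ∀ E ∈ Set.Ico E₀ Em,
        HasPF1Upper
          (fun E' => σ₁ x E' E * ∫ s in (0:ℝ)..(2 * π), ψ x (gam R E' E ω s) E') E Em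
          (2 * π * Real.log (Em - E) * σ₁ x E E * ψ x ω E + u x ω E) := by
  exact stmt11_general (closure G) E₀ Em α β hE₀ hα hβ σ₁ σ₁' hσc hσd hσ'c ψ Cα Cβ hψc hψα hψβ R hR
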